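/- Contraction of a twisted 1-form with a Killing field (Lemma 2.2(a), flat case): let X : ℝ² → ℝ² be a Killing field of the flat plane, X(x₁, x₂) = (c₁ − λx₂, c₂ + λx₁) for constants c₁, c₂, λ ∈ ℝ. Then for every smooth ℂ-valued 1-form ω = (ω₁, ω₂) on U one has −(D₁D₁ + D₂D₂)(X₁ω₁ + X₂ω₂) = X₁·(Δ_Aω)₁ + X₂·(Δ_Aω)₂ + i·F·(X₂ω₁ − X₁ω₂) − 2λ·(D₁ω₂ − D₂ω₁) pointwise on U. -/

import Mathlib

open MeasureTheory Complex

noncomputable section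

/-- Partial derivative in the first coordinate direction. -/
def pd1 {E : Type*} [NormedAddCommGroup E] [NormedSpace ℝ E] (f : ℝ × ℝ → E) (x : ℝ × ℝ) : E :=
  fderiv ℝ f x (1, 0)

/-- Partial derivative in the second coordinate direction. -/
def pd2 {E : Type*} [NormedAddCommGroup E] [NormedSpace ℝ E] (f : ℝ × ℝ → E) (x : ℝ × ℝ) : E :=
  fderiv ℝ f x (0, 1)

/-- First covariant derivative `D₁f = ∂₁f − iA₁f`. -/
def D1 (A1 : ℝ × ℝ → ℝ) (f : ℝ × ℝ → ℂ) (x : ℝ × ℝ) : ℂ :=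
  pd1 f x - Complex.I * (A1 x) * f x

/-- Second covariant derivative `D₂f = ∂₂f − iA₂f`. -/
def D2 (A2 : ℝ × ℝ → ℝ) (f : ℝ × ℝ → ℂ) (x : ℝ × ℝ) : ℂ :=
  pd2 f x - Complex.I * (A2 x) * f x

/-- Curvature function `F = ∂₁A₂ − ∂₂A₁`. -/
def curv (A1 A2 : ℝ × ℝ → ℝ) (x : ℝ × ℝ) : ℝ := pd1 A2 x - pd2 A1 x

/-- `h = (1 − |u|²)/(2ε²)`. -/
def hfun (ε : ℝ) (u : ℝ × ℝ → ℂ) (x : ℝ × ℝ) : ℝ := (1 - ‖u x‖ ^ 2) / (2 * ε ^ 2)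

/-- `σ₊ = D₁u + iD₂u`. -/
def sigP (u : ℝ × ℝ → ℂ) (A1 A2 : ℝ × ℝ → ℝ) (x : ℝ × ℝ) : ℂ :=
  D1 A1 u x + Complex.I * D2 A2 u x

/-- `σ₋ = D₁u − iD₂u`. -/
def sigM (u : ℝ × ℝ → ℂ) (A1 A2 : ℝ × ℝ → ℝ) (x : ℝ × ℝ) : ℂ :=
  D1 A1 u x - Complex.I * D2 A2 u x

/-- The Yang--Mills--Higgs energy over the fundamental domain `[0,1]²`. -/
def energy (ε : ℝ) (u : ℝ × ℝ → ℂ) (A1 A2 : ℝ × ℝ → ℝ) : ℝ :=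
  ∫ x in Set.Icc (0:ℝ) 1 ×ˢ Set.Icc (0:ℝ) 1,
    (ε ^ 2 * curv A1 A2 x ^ 2 + ‖D1 A1 u x‖ ^ 2 + ‖D2 A2 u x‖ ^ 2
      + (1 - ‖u x‖ ^ 2) ^ 2 / (4 * ε ^ 2))

/-- `ℤ²`-periodicity. -/
def Periodic2 {E : Type*} (f : ℝ × ℝ → E) : Prop :=
  ∀ x : ℝ × ℝ, f (x.1 + 1, x.2) = f x ∧ f (x.1, x.2 + 1) = f x

/-- The Yang--Mills--Higgs equations on all of `ℝ²`. -/
def IsYMH (ε : ℝ) (u : ℝ × ℝ → ℂ) (A1 A2 : ℝ × ℝ → ℝ) : Prop :=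
  (∀ x, -(D1 A1 (D1 A1 u) x + D2 A2 (D2 A2 u) x) = (hfun ε u x : ℂ) * u x) ∧
  (∀ x, ε ^ 2 * pd2 (curv A1 A2) x = ((starRingEnd ℂ) (u x) * D1 A1 u x).im) ∧
  (∀ x, ε ^ 2 * pd1 (curv A1 A2) x = -((starRingEnd ℂ) (u x) * D2 A2 u x).im)

/-- The Yang--Mills--Higgs equations on an open set `U ⊆ ℝ²`. -/
def IsYMHOn (ε : ℝ) (u : ℝ × ℝ → ℂ) (A1 A2 : ℝ × ℝ → ℝ) (U : Set (ℝ × ℝ)) : Prop :=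
  (∀ x ∈ U, -(D1 A1 (D1 A1 u) x + D2 A2 (D2 A2 u) x) = (hfun ε u x : ℂ) * u x) ∧
  (∀ x ∈ U, ε ^ 2 * pd2 (curv A1 A2) x = ((starRingEnd ℂ) (u x) * D1 A1 u x).im) ∧
  (∀ x ∈ U, ε ^ 2 * pd1 (curv A1 A2) x = -((starRingEnd ℂ) (u x) * D2 A2 u x).im)

/-- Stability: nonnegative second variation of the energy along all smooth periodic
variations of the section and the connection. -/
def Stable (ε : ℝ) (u : ℝ × ℝ → ℂ) (A1 A2 : ℝ × ℝ → ℝ) : Prop :=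
  ∀ v : ℝ × ℝ → ℂ, ∀ a1 a2 : ℝ × ℝ → ℝ,
    ContDiff ℝ (⊤ : ℕ∞) v → Periodic2 v → ContDiff ℝ (⊤ : ℕ∞) a1 → Periodic2 a1 →
    ContDiff ℝ (⊤ : ℕ∞) a2 → Periodic2 a2 →
    0 ≤ iteratedDeriv 2 (fun t : ℝ =>
      energy ε (fun x => u x + t • v x)
        (fun x => A1 x + t * a1 x) (fun x => A2 x + t * a2 x)) 0

/-- First component of the twisted Hodge Laplacian `Δ_A` on `ℂ`-valued 1-forms. -/
def lapA1 (A1 A2 : ℝ × ℝ → ℝ) (w1 w2 : ℝ × ℝ → ℂ) (x : ℝ × ℝ) : ℂ :=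
  -(D1 A1 (fun y => D1 A1 w1 y + D2 A2 w2 y) x)
    + D2 A2 (fun y => D1 A1 w2 y - D2 A2 w1 y) x

/-- Second component of the twisted Hodge Laplacian `Δ_A` on `ℂ`-valued 1-forms. -/
def lapA2 (A1 A2 : ℝ × ℝ → ℝ) (w1 w2 : ℝ × ℝ → ℂ) (x : ℝ × ℝ) : ℂ :=
  -(D2 A2 (fun y => D1 A1 w1 y + D2 A2 w2 y) x)
    - D1 A1 (fun y => D1 A1 w2 y - D2 A2 w1 y) x

/-!
Write `∇*∇ = -(D₁D₁ + D₂D₂)`. Since `[D₁, D₂] = -iF`, the Weitzenböck formula reads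
`(Δ_A ω)₁ = ∇*∇ω₁ + iFω₂`, `(Δ_A ω)₂ = ∇*∇ω₂ - iFω₁`. On the other hand the second-order Leibniz
rule gives `∇*∇(Xₖωₖ) = Xₖ∇*∇ωₖ - 2 ∂ⱼXₖ Dⱼωₖ - (∂ⱼ∂ⱼXₖ) ωₖ`. For a Killing field of the plane
`∂ⱼXₖ` is constant and skew, so the last term vanishes and the middle one is a multiple of
`D₁ω₂ - D₂ω₁`.
-/

open scoped Topology

section SecondDerivative

variable {E F : Type*} [NormedAddCommGroup E] [NormedSpace ℝ E]
  [NormedAddCommGroup F] [NormedSpace ℝ F] {f : E → F} {x : E}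

lemma differentiableAt_fderiv_of_contDiffAt_two (hf : ContDiffAt ℝ 2 f x) :
    DifferentiableAt ℝ (fderiv ℝ f) x :=
  (hf.fderiv_right (m := 1) (by norm_num)).differentiableAt one_ne_zero

lemma differentiableAt_fderiv_apply (hf : ContDiffAt ℝ 2 f x) (v : E) :
    DifferentiableAt ℝ (fun y => fderiv ℝ f y v) x :=
  (differentiableAt_fderiv_of_contDiffAt_two hf).clm_apply (differentiableAt_const v)

lemma fderiv_fderiv_apply (hf : ContDiffAt ℝ 2 f x) (u v : E) :
    fderiv ℝ (fun y => fderiv ℝ f y v) x u = fderiv ℝ (fderiv ℝ f) x u v := by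
  simp [fderiv_clm_apply (differentiableAt_fderiv_of_contDiffAt_two hf) (differentiableAt_const v)]

lemma eventually_differentiableAt_of_contDiffAt_two (hf : ContDiffAt ℝ 2 f x) :
    ∀ᶠ y in 𝓝 x, DifferentiableAt ℝ f y :=
  (hf.eventually (by simp)).mono fun _ hy => hy.differentiableAt two_ne_zero

lemma contDiffAt_two_of_contDiffOn_top {U : Set E} (hU : IsOpen U)
    (hf : ContDiffOn ℝ (⊤ : ℕ∞) f U) (hx : x ∈ U) : ContDiffAt ℝ 2 f x :=
  (hf.contDiffAt (hU.mem_nhds hx)).of_le (WithTop.coe_le_coe.mpr le_top)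

end SecondDerivative

section CovariantDerivative

variable {E : Type*} [NormedAddCommGroup E] [NormedSpace ℝ E]
  {a b g : E → ℝ} {f f' : E → ℂ} {x : E}

/-- The covariant derivative `∇ᵥf = ∂ᵥf - i a f` of a section of a trivialized Hermitian line bundle
in the constant direction `v`. Here `a` is the component along `v` of the connection form, so that
`D1` and `D2` are the instances for the two coordinate directions of the plane. -/
def covDeriv (a : E → ℝ) (v : E) (f : E → ℂ) (x : E) : ℂ :=
  fderiv ℝ f x v - I * a x * f x

lemma differentiableAt_ofReal_mul (hg : DifferentiableAt ℝ g x) (hf : DifferentiableAt ℝ f x) :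
    DifferentiableAt ℝ (fun y => (g y : ℂ) * f y) x := by
  simpa only [real_smul] using hg.fun_smul hf

lemma contDiffAt_ofReal_mul {n : WithTop ℕ∞} (hg : ContDiffAt ℝ n g x) (hf : ContDiffAt ℝ n f x) :
    ContDiffAt ℝ n (fun y => (g y : ℂ) * f y) x := by
  simpa only [real_smul] using hg.fun_smul hf

lemma fderiv_ofReal_mul_apply (hg : DifferentiableAt ℝ g x) (hf : DifferentiableAt ℝ f x) (v : E) :
    fderiv ℝ (fun y => (g y : ℂ) * f y) x v
      = (g x : ℂ) * fderiv ℝ f x v + (fderiv ℝ g x v : ℂ) * f x := by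
  simp only [← real_smul]
  rw [fderiv_fun_smul hg hf]
  simp

lemma covDeriv_congr (h : f =ᶠ[𝓝 x] f') (a : E → ℝ) (v : E) :
    covDeriv a v f x = covDeriv a v f' x := by
  rw [covDeriv, covDeriv, h.fderiv_eq, h.eq_of_nhds]

lemma covDeriv_add (hf : DifferentiableAt ℝ f x) (hf' : DifferentiableAt ℝ f' x)
    (a : E → ℝ) (v : E) :
    covDeriv a v (fun y => f y + f' y) x = covDeriv a v f x + covDeriv a v f' x := by
  simp only [covDeriv, fderiv_fun_add hf hf', add_apply]
  ring

lemma covDeriv_sub (hf : DifferentiableAt ℝ f x) (hf' : DifferentiableAt ℝ f' x)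
    (a : E → ℝ) (v : E) :
    covDeriv a v (fun y => f y - f' y) x = covDeriv a v f x - covDeriv a v f' x := by
  simp only [covDeriv, fderiv_fun_sub hf hf', sub_apply]
  ring

lemma covDeriv_ofReal_mul (hg : DifferentiableAt ℝ g x) (hf : DifferentiableAt ℝ f x)
    (a : E → ℝ) (v : E) :
    covDeriv a v (fun y => (g y : ℂ) * f y) x
      = (g x : ℂ) * covDeriv a v f x + (fderiv ℝ g x v : ℂ) * f x := by
  simp only [covDeriv, fderiv_ofReal_mul_apply hg hf]
  ring

lemma covDeriv_eq_sub_ofReal_mul (a : E → ℝ) (v : E) (f : E → ℂ) :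
    covDeriv a v f = fun y => fderiv ℝ f y v - (a y : ℂ) * (I * f y) := by
  funext y
  rw [covDeriv]
  ring

lemma differentiableAt_covDeriv (ha : DifferentiableAt ℝ a x) (hf : ContDiffAt ℝ 2 f x) (v : E) :
    DifferentiableAt ℝ (covDeriv a v f) x := by
  rw [covDeriv_eq_sub_ofReal_mul]
  exact (differentiableAt_fderiv_apply hf v).fun_sub
    (differentiableAt_ofReal_mul ha ((hf.differentiableAt two_ne_zero).const_mul I))

lemma fderiv_covDeriv_apply (ha : DifferentiableAt ℝ a x) (hf : ContDiffAt ℝ 2 f x) (u v : E) :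
    fderiv ℝ (covDeriv a v f) x u
      = fderiv ℝ (fderiv ℝ f) x u v
        - I * (a x * fderiv ℝ f x u + (fderiv ℝ a x u : ℂ) * f x) := by
  have hf₁ : DifferentiableAt ℝ f x := hf.differentiableAt two_ne_zero
  rw [covDeriv_eq_sub_ofReal_mul,
    fderiv_fun_sub (differentiableAt_fderiv_apply hf v)
      (differentiableAt_ofReal_mul ha (hf₁.const_mul I)),
    sub_apply, fderiv_fderiv_apply hf, fderiv_ofReal_mul_apply ha (hf₁.const_mul I),
    fderiv_const_mul hf₁, smul_apply, smul_eq_mul]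
  ring

lemma covDeriv_commutator (ha : DifferentiableAt ℝ a x) (hb : DifferentiableAt ℝ b x)
    (hf : ContDiffAt ℝ 2 f x) (u v : E) :
    covDeriv a u (covDeriv b v f) x - covDeriv b v (covDeriv a u f) x
      = -(I * (fderiv ℝ b x u - fderiv ℝ a x v : ℝ) * f x) := by
  have hsymm : fderiv ℝ (fderiv ℝ f) x u v = fderiv ℝ (fderiv ℝ f) x v u :=
    hf.isSymmSndFDerivAt (by simp) u v
  rw [covDeriv, covDeriv, covDeriv, covDeriv, fderiv_covDeriv_apply hb hf,
    fderiv_covDeriv_apply ha hf, hsymm, ofReal_sub]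
  ring

lemma covDeriv_covDeriv_add (ha : DifferentiableAt ℝ a x) (hf : ContDiffAt ℝ 2 f x)
    (hf' : ContDiffAt ℝ 2 f' x) (v : E) :
    covDeriv a v (covDeriv a v fun y => f y + f' y) x
      = covDeriv a v (covDeriv a v f) x + covDeriv a v (covDeriv a v f') x := by
  have hadd : covDeriv a v (fun y => f y + f' y)
      =ᶠ[𝓝 x] fun y => covDeriv a v f y + covDeriv a v f' y := by
    filter_upwards [eventually_differentiableAt_of_contDiffAt_two hf,
      eventually_differentiableAt_of_contDiffAt_two hf'] with y hy hy'
    exact covDeriv_add hy hy' a v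
  rw [covDeriv_congr hadd,
    covDeriv_add (differentiableAt_covDeriv ha hf v) (differentiableAt_covDeriv ha hf' v)]

lemma covDeriv_covDeriv_ofReal_mul (ha : DifferentiableAt ℝ a x) (hg : ContDiffAt ℝ 2 g x)
    (hf : ContDiffAt ℝ 2 f x) (v : E) :
    covDeriv a v (covDeriv a v fun y => (g y : ℂ) * f y) x
      = (g x : ℂ) * covDeriv a v (covDeriv a v f) x
        + 2 * (fderiv ℝ g x v : ℂ) * covDeriv a v f x
        + (fderiv ℝ (fun y => fderiv ℝ g y v) x v : ℂ) * f x := by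
  have hg₁ := hg.differentiableAt two_ne_zero
  have hf₁ := hf.differentiableAt two_ne_zero
  have hg' := differentiableAt_fderiv_apply hg v
  have hf' := differentiableAt_covDeriv ha hf v
  have hleibniz : covDeriv a v (fun y => (g y : ℂ) * f y)
      =ᶠ[𝓝 x] fun y => (g y : ℂ) * covDeriv a v f y + (fderiv ℝ g y v : ℂ) * f y := by
    filter_upwards [eventually_differentiableAt_of_contDiffAt_two hg,
      eventually_differentiableAt_of_contDiffAt_two hf] with y hgy hfy
    exact covDeriv_ofReal_mul hgy hfy a v
  rw [covDeriv_congr hleibniz,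
    covDeriv_add (differentiableAt_ofReal_mul hg₁ hf') (differentiableAt_ofReal_mul hg' hf₁),
    covDeriv_ofReal_mul hg₁ hf', covDeriv_ofReal_mul hg' hf₁]
  ring

end CovariantDerivative

section Plane

variable {A1 A2 g X1 X2 : ℝ × ℝ → ℝ} {f f' w1 w2 : ℝ × ℝ → ℂ} {x : ℝ × ℝ}

lemma D1_eq_covDeriv (A1 : ℝ × ℝ → ℝ) (f : ℝ × ℝ → ℂ) : D1 A1 f = covDeriv A1 (1, 0) f := rfl

lemma D2_eq_covDeriv (A2 : ℝ × ℝ → ℝ) (f : ℝ × ℝ → ℂ) : D2 A2 f = covDeriv A2 (0, 1) f := rfl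

/-- The connection Laplacian `D₁D₁ + D₂D₂` on sections, with the analyst's sign: it is the negative
of `∇*∇`. -/
def connLap (A1 A2 : ℝ × ℝ → ℝ) (f : ℝ × ℝ → ℂ) (x : ℝ × ℝ) : ℂ :=
  D1 A1 (D1 A1 f) x + D2 A2 (D2 A2 f) x

lemma D1_D2_sub_D2_D1 (hA1 : DifferentiableAt ℝ A1 x) (hA2 : DifferentiableAt ℝ A2 x)
    (hf : ContDiffAt ℝ 2 f x) :
    D1 A1 (D2 A2 f) x - D2 A2 (D1 A1 f) x = -(I * curv A1 A2 x * f x) :=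
  covDeriv_commutator hA1 hA2 hf (1, 0) (0, 1)

lemma lapA1_eq_neg_connLap_add (hA1 : DifferentiableAt ℝ A1 x) (hA2 : DifferentiableAt ℝ A2 x)
    (hw1 : ContDiffAt ℝ 2 w1 x) (hw2 : ContDiffAt ℝ 2 w2 x) :
    lapA1 A1 A2 w1 w2 x = -connLap A1 A2 w1 x + I * curv A1 A2 x * w2 x := by
  have hcomm := D1_D2_sub_D2_D1 hA1 hA2 hw2
  simp only [lapA1, connLap, D1_eq_covDeriv, D2_eq_covDeriv] at hcomm ⊢
  rw [covDeriv_add (differentiableAt_covDeriv hA1 hw1 _) (differentiableAt_covDeriv hA2 hw2 _),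
    covDeriv_sub (differentiableAt_covDeriv hA1 hw2 _) (differentiableAt_covDeriv hA2 hw1 _)]
  linear_combination -hcomm

lemma lapA2_eq_neg_connLap_sub (hA1 : DifferentiableAt ℝ A1 x) (hA2 : DifferentiableAt ℝ A2 x)
    (hw1 : ContDiffAt ℝ 2 w1 x) (hw2 : ContDiffAt ℝ 2 w2 x) :
    lapA2 A1 A2 w1 w2 x = -connLap A1 A2 w2 x - I * curv A1 A2 x * w1 x := by
  have hcomm := D1_D2_sub_D2_D1 hA1 hA2 hw1
  simp only [lapA2, connLap, D1_eq_covDeriv, D2_eq_covDeriv] at hcomm ⊢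
  rw [covDeriv_add (differentiableAt_covDeriv hA1 hw1 _) (differentiableAt_covDeriv hA2 hw2 _),
    covDeriv_sub (differentiableAt_covDeriv hA1 hw2 _) (differentiableAt_covDeriv hA2 hw1 _)]
  linear_combination hcomm

lemma connLap_add (hA1 : DifferentiableAt ℝ A1 x) (hA2 : DifferentiableAt ℝ A2 x)
    (hf : ContDiffAt ℝ 2 f x) (hf' : ContDiffAt ℝ 2 f' x) :
    connLap A1 A2 (fun y => f y + f' y) x = connLap A1 A2 f x + connLap A1 A2 f' x := by
  simp only [connLap, D1_eq_covDeriv, D2_eq_covDeriv, covDeriv_covDeriv_add hA1 hf hf',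
    covDeriv_covDeriv_add hA2 hf hf']
  ring

lemma connLap_ofReal_mul (hA1 : DifferentiableAt ℝ A1 x) (hA2 : DifferentiableAt ℝ A2 x)
    (hg : ContDiffAt ℝ 2 g x) (hf : ContDiffAt ℝ 2 f x) :
    connLap A1 A2 (fun y => (g y : ℂ) * f y) x
      = (g x : ℂ) * connLap A1 A2 f x
        + 2 * (pd1 g x * D1 A1 f x + pd2 g x * D2 A2 f x)
        + (pd1 (pd1 g) x + pd2 (pd2 g) x : ℝ) * f x := by
  have hD1 : D1 A1 (D1 A1 fun y => (g y : ℂ) * f y) x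
      = g x * D1 A1 (D1 A1 f) x + 2 * pd1 g x * D1 A1 f x + pd1 (pd1 g) x * f x :=
    covDeriv_covDeriv_ofReal_mul hA1 hg hf (1, 0)
  have hD2 : D2 A2 (D2 A2 fun y => (g y : ℂ) * f y) x
      = g x * D2 A2 (D2 A2 f) x + 2 * pd2 g x * D2 A2 f x + pd2 (pd2 g) x * f x :=
    covDeriv_covDeriv_ofReal_mul hA2 hg hf (0, 1)
  rw [connLap, connLap, hD1, hD2]
  push_cast
  ring

lemma neg_connLap_contraction (hA1 : DifferentiableAt ℝ A1 x) (hA2 : DifferentiableAt ℝ A2 x)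
    (hw1 : ContDiffAt ℝ 2 w1 x) (hw2 : ContDiffAt ℝ 2 w2 x)
    (hX1 : ContDiffAt ℝ 2 X1 x) (hX2 : ContDiffAt ℝ 2 X2 x) :
    -connLap A1 A2 (fun y => (X1 y : ℂ) * w1 y + (X2 y : ℂ) * w2 y) x
      = (X1 x : ℂ) * lapA1 A1 A2 w1 w2 x + (X2 x : ℂ) * lapA2 A1 A2 w1 w2 x
        + I * curv A1 A2 x * ((X2 x : ℂ) * w1 x - (X1 x : ℂ) * w2 x)
        - 2 * (pd1 X1 x * D1 A1 w1 x + pd2 X1 x * D2 A2 w1 x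
          + pd1 X2 x * D1 A1 w2 x + pd2 X2 x * D2 A2 w2 x)
        - ((pd1 (pd1 X1) x + pd2 (pd2 X1) x : ℝ) * w1 x
          + (pd1 (pd1 X2) x + pd2 (pd2 X2) x : ℝ) * w2 x) := by
  rw [connLap_add hA1 hA2 (contDiffAt_ofReal_mul hX1 hw1) (contDiffAt_ofReal_mul hX2 hw2),
    connLap_ofReal_mul hA1 hA2 hX1 hw1, connLap_ofReal_mul hA1 hA2 hX2 hw2,
    lapA1_eq_neg_connLap_add hA1 hA2 hw1 hw2, lapA2_eq_neg_connLap_sub hA1 hA2 hw1 hw2]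
  ring

lemma fderiv_const_sub_mul_snd (c l : ℝ) :
    fderiv ℝ (fun y : ℝ × ℝ => c - l * y.2) = fun _ => -(l • ContinuousLinearMap.snd ℝ ℝ ℝ) :=
  funext fun _ => ((hasFDerivAt_snd.const_mul l).const_sub c).fderiv

lemma fderiv_const_add_mul_fst (c l : ℝ) :
    fderiv ℝ (fun y : ℝ × ℝ => c + l * y.1) = fun _ => l • ContinuousLinearMap.fst ℝ ℝ ℝ :=
  funext fun _ => ((hasFDerivAt_fst.const_mul l).const_add c).fderiv

theorem twisted_laplacian_killing_contraction_general
    (hA1 : DifferentiableAt ℝ A1 x) (hA2 : DifferentiableAt ℝ A2 x)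
    (hw1 : ContDiffAt ℝ 2 w1 x) (hw2 : ContDiffAt ℝ 2 w2 x) (c1 c2 lam : ℝ)
    (hX1 : X1 = fun x => c1 - lam * x.2) (hX2 : X2 = fun x => c2 + lam * x.1) :
    -(D1 A1 (D1 A1 (fun y => (X1 y : ℂ) * w1 y + (X2 y : ℂ) * w2 y)) x
        + D2 A2 (D2 A2 (fun y => (X1 y : ℂ) * w1 y + (X2 y : ℂ) * w2 y)) x) =
      (X1 x : ℂ) * lapA1 A1 A2 w1 w2 x + (X2 x : ℂ) * lapA2 A1 A2 w1 w2 x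
        + I * curv A1 A2 x * ((X2 x : ℂ) * w1 x - (X1 x : ℂ) * w2 x)
        - 2 * (lam : ℂ) * (D1 A1 w2 x - D2 A2 w1 x) := by
  have hX1_smooth : ContDiffAt ℝ 2 X1 x := by rw [hX1]; fun_prop
  have hX2_smooth : ContDiffAt ℝ 2 X2 x := by rw [hX2]; fun_prop
  have hpd1_X1 : pd1 X1 = fun _ => 0 := by
    funext y; rw [pd1, hX1, fderiv_const_sub_mul_snd]; simp
  have hpd2_X1 : pd2 X1 = fun _ => -lam := by
    funext y; rw [pd2, hX1, fderiv_const_sub_mul_snd]; simp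
  have hpd1_X2 : pd1 X2 = fun _ => lam := by
    funext y; rw [pd1, hX2, fderiv_const_add_mul_fst]; simp
  have hpd2_X2 : pd2 X2 = fun _ => 0 := by
    funext y; rw [pd2, hX2, fderiv_const_add_mul_fst]; simp
  have hpd1_const (c : ℝ) : pd1 (fun _ : ℝ × ℝ => c) x = 0 := by simp [pd1]
  have hpd2_const (c : ℝ) : pd2 (fun _ : ℝ × ℝ => c) x = 0 := by simp [pd2]
  have hcontr := neg_connLap_contraction hA1 hA2 hw1 hw2 hX1_smooth hX2_smooth
  rw [connLap] at hcontr
  rw [hcontr, hpd1_X1, hpd2_X1, hpd1_X2, hpd2_X2, hpd1_const, hpd1_const, hpd2_const, hpd2_const]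
  push_cast
  ring

end Plane

/-- Contraction of a twisted 1-form with a Killing field of the flat plane
(Lemma 2.2(a), flat case). -/
theorem twisted_laplacian_killing_contraction
    (U : Set (ℝ × ℝ)) (hU : IsOpen U) (A1 A2 : ℝ × ℝ → ℝ)
    (hA1 : ContDiffOn ℝ (⊤ : ℕ∞) A1 U) (hA2 : ContDiffOn ℝ (⊤ : ℕ∞) A2 U)
    (w1 w2 : ℝ × ℝ → ℂ) (hw1 : ContDiffOn ℝ (⊤ : ℕ∞) w1 U) (hw2 : ContDiffOn ℝ (⊤ : ℕ∞) w2 U)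
    (c1 c2 lam : ℝ)
    (X1 X2 : ℝ × ℝ → ℝ)
    (hX1 : X1 = fun x => c1 - lam * x.2) (hX2 : X2 = fun x => c2 + lam * x.1) :
    ∀ x ∈ U,
      -(D1 A1 (D1 A1 (fun y => (X1 y : ℂ) * w1 y + (X2 y : ℂ) * w2 y)) x
          + D2 A2 (D2 A2 (fun y => (X1 y : ℂ) * w1 y + (X2 y : ℂ) * w2 y)) x) =
        (X1 x : ℂ) * lapA1 A1 A2 w1 w2 x + (X2 x : ℂ) * lapA2 A1 A2 w1 w2 x
          + Complex.I * curv A1 A2 x * ((X2 x : ℂ) * w1 x - (X1 x : ℂ) * w2 x)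
          - 2 * (lam : ℂ) * (D1 A1 w2 x - D2 A2 w1 x) := by
  intro x hx
  exact twisted_laplacian_killing_contraction_general
    ((contDiffAt_two_of_contDiffOn_top hU hA1 hx).differentiableAt two_ne_zero)
    ((contDiffAt_two_of_contDiffOn_top hU hA2 hx).differentiableAt two_ne_zero)
    (contDiffAt_two_of_contDiffOn_top hU hw1 hx) (contDiffAt_two_of_contDiffOn_top hU hw2 hx)
    c1 c2 lam hX1 hX2
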